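/- arXiv:1807.05803 — 3 statements merged into one kernel-verified Lean document; each statement's English description precedes it below -/
import Mathlib

section
/- Let G be a directed multigraph and let s, t be distinct vertices. Then there is exactly one s-t min-cut that is an s-t-latest cut; that is, there is a unique s-t min-cut M such that no s-t cut M' satisfies M' > M and |M'| ≤ |M|. -/
/-!
For a vertex set `T` containing `t` but not `s`, the arcs entering `T` form an `s`-`t` cut
(`isCut_entering`), whose target side is contained in `T` (`targetSide_entering_subset`).
Conversely a min-cut `M` is exactly the set of arcs entering its target side
(`eq_entering_of_isMinCut`), so a min-cut is determined by its target side.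

Existence: a min-cut whose target side has the fewest vertices is latest, since a cut beating it
would itself be a min-cut with a smaller target side.

Uniqueness: let `M₁` be a latest min-cut and `M₂` any min-cut, with target sides `A`, `B`. By submodularity of
the number of entering arcs (`entering_submodular`) and minimality applied to `A ∪ B`, the arcs
entering `A ∩ B` form a cut of size at most `|M₁|`. Its target side lies in `A ∩ B ⊆ A`, so
latestness of `M₁` forces it to be `A`, whence `A ⊆ B` (`targetSide_subset_of_isLatest`).
If `M₂` is the min-cut with the smallest target side, then `A = B`, so `M₁ = M₂`.
-/

namespace APMC

/-- `Walk tl hd s t p` : the list of arcs `p` forms a path from `s` to `t` in the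
directed multigraph with tail map `tl` and head map `hd`
(the empty path goes from a vertex to itself). -/
inductive Walk {V E : Type} (tl hd : E → V) : V → V → List E → Prop
  | nil (v : V) : Walk tl hd v v []
  | cons (e : E) {v : V} {p : List E} :
      Walk tl hd (hd e) v p → Walk tl hd (tl e) v (e :: p)

variable {V E : Type}

/-- A walk from `s` to `t` using only arcs from `A`. -/
def WalkIn (tl hd : E → V) (A : Set E) (s t : V) (p : List E) : Prop :=
  Walk tl hd s t p ∧ ∀ e ∈ p, e ∈ A

/-- `t` is reachable from `s` in `(V, A)`. -/
def Reaches (tl hd : E → V) (A : Set E) (s t : V) : Prop :=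
  ∃ p, WalkIn tl hd A s t p

/-- `M` is an `s`-`t` cut in `(V, A)`: every path from `s` to `t` within `A`
contains an arc of `M`. -/
def IsCutIn (tl hd : E → V) (A : Set E) (s t : V) (M : Set E) : Prop :=
  ∀ p, WalkIn tl hd A s t p → ∃ e ∈ p, e ∈ M

/-- The target side `T_M` of a cut `M`: vertices admitting a path to `t` avoiding `M`. -/
def targetSide (tl hd : E → V) (A : Set E) (t : V) (M : Set E) : Set V :=
  {x | ∃ p, WalkIn tl hd A x t p ∧ ∀ e ∈ p, e ∉ M}

/-- The source side `S_M` of a cut `M`: vertices admitting a path from `s` avoiding `M`. -/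
def sourceSide (tl hd : E → V) (A : Set E) (s : V) (M : Set E) : Set V :=
  {x | ∃ p, WalkIn tl hd A s x p ∧ ∀ e ∈ p, e ∉ M}

/-- `M` is an `s`-`t` min-cut in `(V, A)`: a cut of minimum cardinality. -/
def IsMinCutIn (tl hd : E → V) (A : Set E) (s t : V) (M : Set E) : Prop :=
  IsCutIn tl hd A s t M ∧ ∀ M' : Set E, IsCutIn tl hd A s t M' → M.ncard ≤ M'.ncard

/-- `M` is a minimal `s`-`t` cut in `(V, A)`: no proper subset of `M` is a cut. -/
def IsMinimalCutIn (tl hd : E → V) (A : Set E) (s t : V) (M : Set E) : Prop :=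
  IsCutIn tl hd A s t M ∧ ∀ M' : Set E, M' ⊂ M → ¬ IsCutIn tl hd A s t M'

/-- `StrictLater ... M M'` means `M > M'`, i.e. `T_M ⊆ T_{M'}` and `T_M ≠ T_{M'}`. -/
def StrictLater (tl hd : E → V) (A : Set E) (t : V) (M M' : Set E) : Prop :=
  targetSide tl hd A t M ⊆ targetSide tl hd A t M' ∧
    targetSide tl hd A t M ≠ targetSide tl hd A t M'

/-- `StrictEarlier ... M M'` means `M < M'`, i.e. `S_M ⊆ S_{M'}` and `S_M ≠ S_{M'}`. -/
def StrictEarlier (tl hd : E → V) (A : Set E) (s : V) (M M' : Set E) : Prop :=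
  sourceSide tl hd A s M ⊆ sourceSide tl hd A s M' ∧
    sourceSide tl hd A s M ≠ sourceSide tl hd A s M'

/-- `M` is an `s`-`t`-latest cut in `(V, A)`:
no `s`-`t` cut `M'` satisfies `M' > M` and `|M'| ≤ |M|`. -/
def IsLatestIn (tl hd : E → V) (A : Set E) (s t : V) (M : Set E) : Prop :=
  IsCutIn tl hd A s t M ∧
    ¬ ∃ M' : Set E, IsCutIn tl hd A s t M' ∧ StrictLater tl hd A t M' M ∧
      M'.ncard ≤ M.ncard

/-- `M` is an `s`-`t`-earliest cut in `(V, A)`: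
no `s`-`t` cut `M'` satisfies `M' < M` and `|M'| ≤ |M|`. -/
def IsEarliestIn (tl hd : E → V) (A : Set E) (s t : V) (M : Set E) : Prop :=
  IsCutIn tl hd A s t M ∧
    ¬ ∃ M' : Set E, IsCutIn tl hd A s t M' ∧ StrictEarlier tl hd A s M' M ∧
      M'.ncard ≤ M.ncard

/-- `A₁, A₂` is an arc split of the arc set: a partition of the arcs such that
no arc of `A₁` starts where an arc of `A₂` ends. -/
def ArcSplit (tl hd : E → V) (A₁ A₂ : Set E) : Prop :=
  A₁ ∪ A₂ = Set.univ ∧ A₁ ∩ A₂ = ∅ ∧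
    ∀ e₁ ∈ A₂, ∀ e₂ ∈ A₁, hd e₁ ≠ tl e₂

/-- `M` is split-covering with respect to the arc split `A₁, A₂` and vertices `s`, `t`. -/
def SplitCovering (tl hd : E → V) (A₁ A₂ : Set E) (s t : V) (M : Set E) : Prop :=
  ∀ v : V, ∃ Mv ⊆ M,
    ((s ≠ v ∧ v ≠ t ∧ (¬ Reaches tl hd A₁ s v ∨ ¬ Reaches tl hd A₂ v t)) ∨
     IsEarliestIn tl hd A₁ s v Mv ∨
     IsLatestIn tl hd A₂ v t Mv)

/-- `M` is late-covering with respect to the `s`-`t` cut `C`. -/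
def LateCovering (tl hd : E → V) (t : V) (C M : Set E) : Prop :=
  ∀ e ∈ C, e ∈ M ∨ ∃ M' ⊆ M, IsLatestIn tl hd Set.univ (hd e) t M'

end APMC

open APMC

namespace APMC

/-- The arcs entering the vertex set `T`. -/
def entering {V E : Type} (tl hd : E → V) (T : Set V) : Set E := {e | tl e ∉ T ∧ hd e ∈ T}

variable {V E : Type} {tl hd : E → V} {s t : V}

lemma Walk.mem_of_avoids_entering {T : Set V} {x y : V} {p : List E}
    (h : Walk tl hd x y p) (hy : y ∈ T) (hp : ∀ e ∈ p, e ∉ entering tl hd T) : x ∈ T := by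
  induction h with
  | nil v => exact hy
  | cons e h ih =>
    have h1 := ih hy fun f hf => hp f (List.mem_cons_of_mem _ hf)
    by_contra hx
    exact hp e List.mem_cons_self ⟨hx, h1⟩

lemma isCut_entering {T : Set V} (hs : s ∉ T) (ht : t ∈ T) :
    IsCutIn tl hd Set.univ s t (entering tl hd T) := by
  intro p hp
  by_contra! h
  exact hs (hp.1.mem_of_avoids_entering ht h)

lemma targetSide_entering_subset {T : Set V} (ht : t ∈ T) :
    targetSide tl hd Set.univ t (entering tl hd T) ⊆ T := by
  rintro x ⟨p, hp, h⟩
  exact hp.1.mem_of_avoids_entering ht h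

lemma target_mem_targetSide (M : Set E) : t ∈ targetSide tl hd Set.univ t M :=
  ⟨[], ⟨Walk.nil t, by simp⟩, by simp⟩

lemma source_notMem_targetSide {M : Set E} (hM : IsCutIn tl hd Set.univ s t M) :
    s ∉ targetSide tl hd Set.univ t M := by
  rintro ⟨p, hp, h⟩
  obtain ⟨e, he, heM⟩ := hM p hp
  exact h e he heM

/-- An arc outside `M` whose head reaches `t` while avoiding `M` prolongs the path to its tail. -/
lemma entering_targetSide_subset (M : Set E) :
    entering tl hd (targetSide tl hd Set.univ t M) ⊆ M := by
  rintro e ⟨h1, p, hp, h⟩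
  by_contra he
  refine h1 ⟨e :: p, ⟨Walk.cons e hp.1, by simp⟩, ?_⟩
  intro f hf
  rcases List.mem_cons.1 hf with rfl | hf
  · exact he
  · exact h f hf

lemma eq_entering_of_isMinCut [Finite E] {M : Set E} (hM : IsMinCutIn tl hd Set.univ s t M) :
    entering tl hd (targetSide tl hd Set.univ t M) = M :=
  Set.eq_of_subset_of_ncard_le (entering_targetSide_subset M)
    (hM.2 _ (isCut_entering (source_notMem_targetSide hM.1) (target_mem_targetSide M)))
    (Set.toFinite _)

lemma entering_submodular [Finite E] (A B : Set V) :
    (entering tl hd (A ∩ B)).ncard + (entering tl hd (A ∪ B)).ncard ≤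
      (entering tl hd A).ncard + (entering tl hd B).ncard := by
  rw [← Set.ncard_union_add_ncard_inter (entering tl hd (A ∩ B)) _ (Set.toFinite _)
      (Set.toFinite _),
    ← Set.ncard_union_add_ncard_inter (entering tl hd A) _ (Set.toFinite _) (Set.toFinite _)]
  refine add_le_add (Set.ncard_le_ncard ?_ (Set.toFinite _))
    (Set.ncard_le_ncard ?_ (Set.toFinite _))
  · intro e
    simp only [entering, Set.mem_union, Set.mem_inter_iff, Set.mem_ofPred_eq]
    tauto
  · intro e
    simp only [entering, Set.mem_union, Set.mem_inter_iff, Set.mem_ofPred_eq]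
    tauto

/-- The target side of a latest min-cut is contained in that of every min-cut. -/
lemma targetSide_subset_of_isLatest [Finite E] {M₁ M₂ : Set E}
    (h₁ : IsMinCutIn tl hd Set.univ s t M₁) (hl : IsLatestIn tl hd Set.univ s t M₁)
    (h₂ : IsMinCutIn tl hd Set.univ s t M₂) :
    targetSide tl hd Set.univ t M₁ ⊆ targetSide tl hd Set.univ t M₂ := by
  have e₁ := eq_entering_of_isMinCut h₁
  have e₂ := eq_entering_of_isMinCut h₂
  have s₁ := source_notMem_targetSide h₁.1
  have s₂ := source_notMem_targetSide h₂.1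
  have t₁ := target_mem_targetSide (tl := tl) (hd := hd) (t := t) M₁
  have t₂ := target_mem_targetSide (tl := tl) (hd := hd) (t := t) M₂
  generalize targetSide tl hd Set.univ t M₂ = B at *
  set A := targetSide tl hd Set.univ t M₁ with hA
  have hsub := entering_submodular (tl := tl) (hd := hd) A B
  have hunion : M₂.ncard ≤ (entering tl hd (A ∪ B)).ncard :=
    h₂.2 _ (isCut_entering (by simp [s₁, s₂]) (Or.inl t₁))
  rw [e₁, e₂] at hsub
  have hT := targetSide_entering_subset (tl := tl) (hd := hd) (T := A ∩ B) ⟨t₁, t₂⟩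
  by_contra hAB
  refine hl.2 ⟨entering tl hd (A ∩ B), isCut_entering (fun h => s₁ h.1) ⟨t₁, t₂⟩,
    ⟨fun x hx => (hT hx).1, fun heq => hAB ?_⟩, by omega⟩
  intro x hx
  rw [hA, ← heq] at hx
  exact (hT hx).2

end APMC

/-- There is exactly one `s`-`t` min-cut that is an `s`-`t`-latest cut. -/
theorem unique_latest_min_cut {V E : Type} [Fintype V] [Fintype E]
    (tl hd : E → V) (s t : V) (hst : s ≠ t) :
    ∃! M : Set E, IsMinCutIn tl hd Set.univ s t M ∧ IsLatestIn tl hd Set.univ s t M := by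
  -- A cut exists: the arcs entering `{t}`.
  obtain ⟨M₀, hM₀, hmin₀⟩ := Set.exists_min_image {M : Set E | IsCutIn tl hd Set.univ s t M}
    Set.ncard (Set.toFinite _) ⟨_, isCut_entering (T := {t}) (by simpa using hst) rfl⟩
  obtain ⟨M, hM, hmin⟩ := Set.exists_min_image {M : Set E | IsMinCutIn tl hd Set.univ s t M}
    (fun M => (targetSide tl hd Set.univ t M).ncard) (Set.toFinite _) ⟨M₀, hM₀, hmin₀⟩
  refine ⟨M, ⟨hM, hM.1, ?_⟩, ?_⟩
  · rintro ⟨M', hc, ⟨hsub, hne⟩, hcard⟩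
    have hle := hmin M' ⟨hc, fun N hN => hcard.trans (hM.2 N hN)⟩
    exact hne (Set.eq_of_subset_of_ncard_le hsub hle (Set.toFinite _))
  · rintro N ⟨hN, hNl⟩
    have hsub := targetSide_subset_of_isLatest hN hNl hM
    have heq := Set.eq_of_subset_of_ncard_le hsub (hmin N hN) (Set.toFinite _)
    rw [← eq_entering_of_isMinCut hN, heq, eq_entering_of_isMinCut hM]
end

section
/- Let G be a directed multigraph, let A₁, A₂ be an arc split of G, and let s, t be distinct vertices. Then there exists an s-t min-cut of G that is split-covering with respect to A₁, A₂ and s, t. -/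
namespace APMC

variable {V E : Type} {tl hd : E → V}

/-- The arcs of `A` that leave the vertex set `X`. -/
def outArcs (tl hd : E → V) (A : Set E) (X : Set V) : Set E :=
  {e | e ∈ A ∧ tl e ∈ X ∧ hd e ∉ X}

/-- A walk whose arcs never leave `X` and that starts in `X` ends in `X`. -/
lemma Walk.mem_of_closed {X : Set V} {x y : V} {p : List E} (h : Walk tl hd x y p)
    (hx : x ∈ X) (hX : ∀ e ∈ p, tl e ∈ X → hd e ∈ X) : y ∈ X := by
  induction h with
  | nil v => exact hx
  | cons e _ ih =>
    exact ih (hX e (by simp) hx) fun e' he' => hX e' (by simp [he'])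

lemma Walk.snoc {x y : V} {p : List E} (h : Walk tl hd x y p) (e : E) (he : tl e = y) :
    Walk tl hd x (hd e) (p ++ [e]) := by
  induction h with
  | nil v => subst he; exact .cons e (.nil _)
  | cons e' _ ih => exact .cons e' (ih he)

lemma sourceSide_subset_of_outArcs {A : Set E} {X : Set V} {s : V} (hs : s ∈ X) :
    sourceSide tl hd A s (outArcs tl hd A X) ⊆ X := by
  rintro x ⟨p, ⟨hw, hA⟩, hM⟩
  refine hw.mem_of_closed hs fun e he htl => ?_
  by_contra hh
  exact hM e he ⟨hA e he, htl, hh⟩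

lemma targetSide_subset_of_outArcs {A : Set E} {Y : Set V} {t : V} (ht : t ∉ Y) :
    targetSide tl hd A t (outArcs tl hd A Y) ⊆ Yᶜ := by
  rintro x ⟨p, ⟨hw, hA⟩, hM⟩ hx
  refine ht (hw.mem_of_closed hx fun e he htl => ?_)
  by_contra hh
  exact hM e he ⟨hA e he, htl, hh⟩

lemma outArcs_sourceSide_subset (A M : Set E) (s : V) :
    outArcs tl hd A (sourceSide tl hd A s M) ⊆ M := by
  rintro e ⟨heA, ⟨p, ⟨hw, hA⟩, hM⟩, hh⟩
  by_contra heM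
  refine hh ⟨p ++ [e], ⟨hw.snoc e rfl, ?_⟩, ?_⟩ <;>
  · intro e' he'
    rcases List.mem_append.1 he' with h | h
    · first | exact hA _ h | exact hM _ h
    · rw [List.mem_singleton.1 h]; assumption

lemma outArcs_compl_targetSide_subset (A M : Set E) (t : V) :
    outArcs tl hd A (targetSide tl hd A t M)ᶜ ⊆ M := by
  rintro e ⟨heA, htl, hh⟩
  by_contra heM
  obtain ⟨p, ⟨hw, hA⟩, hM⟩ := not_not.1 hh
  exact htl ⟨e :: p, ⟨.cons e hw, by simpa [heA] using hA⟩, by simpa [heM] using hM⟩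

lemma mem_sourceSide_self (A M : Set E) (s : V) : s ∈ sourceSide tl hd A s M :=
  ⟨[], ⟨.nil s, by simp⟩, by simp⟩

lemma mem_targetSide_self (A M : Set E) (t : V) : t ∈ targetSide tl hd A t M :=
  ⟨[], ⟨.nil t, by simp⟩, by simp⟩

lemma Walk.append {x y z : V} {p q : List E} (h : Walk tl hd x y p) (h' : Walk tl hd y z q) :
    Walk tl hd x z (p ++ q) := by
  induction h with
  | nil v => exact h'
  | cons e _ ih => exact .cons e (ih h')

/-- Every vertex reachable from `s` without using `M` fails to reach `t` without using `M`. -/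
lemma IsCutIn.sourceSide_subset {M A₁ A₂ : Set E} {s t : V} (h : IsCutIn tl hd Set.univ s t M) :
    sourceSide tl hd A₁ s M ⊆ (targetSide tl hd A₂ t M)ᶜ := by
  rintro x ⟨p, ⟨hw, -⟩, hM⟩ ⟨q, ⟨hw', -⟩, hM'⟩
  obtain ⟨e, he, heM⟩ := h (p ++ q) ⟨hw.append hw', fun _ _ => trivial⟩
  rcases List.mem_append.1 he with h | h
  exacts [hM e h heM, hM' e h heM]

lemma isCutIn_outArcs {A : Set E} {X : Set V} {s v : V} (hs : s ∈ X) (hv : v ∉ X) :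
    IsCutIn tl hd A s v (outArcs tl hd A X) := by
  intro p hp
  by_contra! hM
  exact hv (sourceSide_subset_of_outArcs hs ⟨p, hp, hM⟩)

/-- A walk starting at a vertex from which no `A₁`-arc departs stays in `A₂`. -/
lemma ArcSplit.walk_subset {A₁ A₂ : Set E} (hsplit : ArcSplit tl hd A₁ A₂) {x y : V} {p : List E}
    (h : Walk tl hd x y p) (hx : ∀ e ∈ A₁, x ≠ tl e) : ∀ e ∈ p, e ∈ A₂ := by
  induction h with
  | nil v => simp
  | cons e _ ih =>
    have he : e ∈ A₂ := by
      have : e ∈ A₁ ∪ A₂ := hsplit.1 ▸ trivial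
      exact this.resolve_left fun h => hx e h rfl
    simpa [he] using ih (hsplit.2.2 e he)

lemma isCutIn_pair {A₁ A₂ : Set E} (hsplit : ArcSplit tl hd A₁ A₂) {X Y : Set V} {s t : V}
    (hXY : X ⊆ Y) (hs : s ∈ X) (ht : t ∉ Y) :
    IsCutIn tl hd Set.univ s t (outArcs tl hd A₁ X ∪ outArcs tl hd A₂ Y) := by
  rintro p ⟨hw, -⟩
  by_contra! hM
  refine ht ?_
  clear ht
  induction hw with
  | nil v => exact hXY hs
  | cons e hw ih =>
    have hM' := fun e' he' => hM e' (List.mem_cons_of_mem e he')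
    have he : e ∈ A₁ ∪ A₂ := hsplit.1 ▸ trivial
    rcases he with he | he
    · refine ih ?_ hM'
      by_contra hh
      exact hM e (by simp) (Or.inl ⟨he, hs, hh⟩)
    · -- From the first `A₂`-arc on, the walk stays in `A₂`, hence cannot leave `Y`.
      have hA := hsplit.walk_subset hw (hsplit.2.2 e he)
      refine (Walk.cons e hw).mem_of_closed (hXY hs) fun e' he' htl => ?_
      by_contra hh
      refine hM e' he' (Or.inr ⟨?_, htl, hh⟩)
      rcases List.mem_cons.1 he' with rfl | h
      exacts [he, hA e' h]

end APMC

open APMC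

/-- There exists an `s`-`t` min-cut that is split-covering with respect to the
arc split `A₁, A₂` and vertices `s`, `t`. -/
theorem exists_splitCovering_min_cut {V E : Type} [Fintype V] [Fintype E]
    (tl hd : E → V) (A₁ A₂ : Set E) (hsplit : ArcSplit tl hd A₁ A₂)
    (s t : V) (hst : s ≠ t) :
    ∃ M : Set E, IsMinCutIn tl hd Set.univ s t M ∧
      SplitCovering tl hd A₁ A₂ s t M := by
  let P : Set (Set V × Set V) := {q | q.1 ⊆ q.2 ∧ s ∈ q.1 ∧ t ∉ q.2}
  let f : Set V × Set V → ℕ ×ₗ ℕ := fun q =>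
    toLex ((outArcs tl hd A₁ q.1).ncard + (outArcs tl hd A₂ q.2).ncard, q.1.ncard + q.2ᶜ.ncard)
  obtain ⟨⟨X, Y⟩, ⟨hXY, hs, ht⟩, hmin⟩ := Set.exists_min_image P f (Set.toFinite P)
    ⟨({s}, {s}), subset_rfl, rfl, fun h => hst (Set.mem_singleton_iff.1 h).symm⟩
  simp only at hXY hs ht
  have hmin' : ∀ X' Y' : Set V, X' ⊆ Y' → s ∈ X' → t ∉ Y' →
      (outArcs tl hd A₁ X).ncard + (outArcs tl hd A₂ Y).ncard <
        (outArcs tl hd A₁ X').ncard + (outArcs tl hd A₂ Y').ncard ∨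
      (outArcs tl hd A₁ X).ncard + (outArcs tl hd A₂ Y).ncard =
        (outArcs tl hd A₁ X').ncard + (outArcs tl hd A₂ Y').ncard ∧
      X.ncard + Yᶜ.ncard ≤ X'.ncard + Y'ᶜ.ncard := fun X' Y' h1 h2 h3 =>
    Prod.Lex.toLex_le_toLex.1 (hmin (X', Y') ⟨h1, h2, h3⟩)
  refine ⟨outArcs tl hd A₁ X ∪ outArcs tl hd A₂ Y,
    ⟨isCutIn_pair hsplit hXY hs ht, fun M' hM' => ?_⟩, fun v => ?_⟩
  · have h := hmin' _ _ (hM'.sourceSide_subset (A₁ := A₁) (A₂ := A₂))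
      (mem_sourceSide_self A₁ M' s) (not_not.2 (mem_targetSide_self A₂ M' t))
    have h1 := outArcs_sourceSide_subset (tl := tl) (hd := hd) A₁ M' s
    have h2 := outArcs_compl_targetSide_subset (tl := tl) (hd := hd) A₂ M' t
    have hdisj : Disjoint (outArcs tl hd A₁ (sourceSide tl hd A₁ s M'))
        (outArcs tl hd A₂ (targetSide tl hd A₂ t M')ᶜ) :=
      (Set.disjoint_iff_inter_eq_empty.2 hsplit.2.1).mono (fun _ h => h.1) (fun _ h => h.1)
    have h3 := Set.ncard_le_ncard (Set.union_subset h1 h2)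
    rw [Set.ncard_union_eq hdisj] at h3
    have h4 := Set.ncard_union_le (outArcs tl hd A₁ X) (outArcs tl hd A₂ Y)
    omega
  · by_cases hv : v ∈ X
    · refine ⟨outArcs tl hd A₂ Y, Set.subset_union_right, Or.inr (Or.inr
        ⟨isCutIn_outArcs (hXY hv) ht, ?_⟩)⟩
      rintro ⟨M', hM', ⟨hsub, hne⟩, hcard⟩
      -- The target side of a later cut is a proper subset of `Yᶜ` that could replace `Yᶜ`.
      have hss : targetSide tl hd A₂ t M' ⊂ Yᶜ :=
        (hsub.ssubset_of_ne hne).trans_subset (targetSide_subset_of_outArcs ht)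
      have h := hmin' X (targetSide tl hd A₂ t M')ᶜ
        (hXY.trans (Set.subset_compl_comm.1 hss.subset)) hs
        (not_not.2 (mem_targetSide_self A₂ M' t))
      have h1 := Set.ncard_le_ncard
        (outArcs_compl_targetSide_subset (tl := tl) (hd := hd) A₂ M' t)
      have h2 := Set.ncard_lt_ncard hss
      rw [compl_compl] at h
      omega
    · refine ⟨outArcs tl hd A₁ X, Set.subset_union_left, Or.inr (Or.inl
        ⟨isCutIn_outArcs hs hv, ?_⟩)⟩
      rintro ⟨M', hM', ⟨hsub, hne⟩, hcard⟩
      have hss : sourceSide tl hd A₁ s M' ⊂ X :=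
        (hsub.ssubset_of_ne hne).trans_subset (sourceSide_subset_of_outArcs hs)
      have h := hmin' (sourceSide tl hd A₁ s M') Y (hss.subset.trans hXY)
        (mem_sourceSide_self A₁ M' s) ht
      have h1 := Set.ncard_le_ncard
        (outArcs_sourceSide_subset (tl := tl) (hd := hd) A₁ M' s)
      have h2 := Set.ncard_lt_ncard hss
      omega
end

section
/- Let G be a 4-partite graph with parts A, B, C, D and let H be the associated digraph. Let a ∈ A, d ∈ D with {a,d} ∈ E(G), and suppose there are no b ∈ B, c ∈ C such that a, b, c, d form a 4-clique in G. Then every directed path from a to d in H contains a vertex of B'_{a,d} ∪ C'_{a,d}; that is, B'_{a,d} ∪ C'_{a,d} is an a-d vertex cut in H. -/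
/-!
Arcs of `H` only go forward through `A, B, C, D`, and vertices of `D` have no out-arcs, so a
directed path from `a` to `d` has the form `a, b, d` or `a, c, d` or `a, b, c, d`. In the first
case `b ∈ B'`, in the second `c ∈ C'`. In the third case `{a,b}`, `{b,c}`, `{c,d}` are edges
of `G`, so, as there is no `4`-clique, `{a,c}` or `{b,d}` is a non-edge, which puts `c` in `C'`
or `b` in `B'`.
-/

/-- The vertex set of the digraph `H`, the disjoint union of the four parts
`A`, `B`, `C`, `D` of the `4`-partite graph `G`. -/
inductive V4 (A B C D : Type) where
  | va : A → V4 A B C D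
  | vb : B → V4 A B C D
  | vc : C → V4 A B C D
  | vd : D → V4 A B C D

/-- The arc relation of the digraph `H` associated with the `4`-partite graph `G`
whose edges between the parts are given by the relations `eAB, eBC, eCD, eAC, eBD`
(and `eAD`, which is not used by `H`): arcs `A → B`, `B → C`, `C → D` correspond to
edges of `G`, and arcs `A → C`, `B → D` correspond to non-edges of `G`. -/
def Hadj {A B C D : Type} (eAB : A → B → Prop) (eBC : B → C → Prop)
    (eCD : C → D → Prop) (eAC : A → C → Prop) (eBD : B → D → Prop) :
    V4 A B C D → V4 A B C D → Prop
  | .va x, .vb y => eAB x y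
  | .vb x, .vc y => eBC x y
  | .vc x, .vd y => eCD x y
  | .va x, .vc y => ¬ eAC x y
  | .vb x, .vd y => ¬ eBD x y
  | _, _ => False

/-- `RWalk r s t p` : `p` is the list of vertices of a directed path from `s` to `t`
in the digraph with arc relation `r`. -/
inductive RWalk {V : Type} (r : V → V → Prop) : V → V → List V → Prop
  | nil (v : V) : RWalk r v v [v]
  | cons {u v w : V} {p : List V} : r u v → RWalk r v w p → RWalk r u w (u :: p)

/-- `P` is a family of pairwise internally vertex-disjoint directed paths from `s`
to `t`: paths in the family share no vertices other than `s` and `t`. -/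
def IVDFamily {V : Type} (r : V → V → Prop) (s t : V) (P : Finset (List V)) : Prop :=
  (∀ p ∈ P, RWalk r s t p) ∧
    ∀ p ∈ P, ∀ q ∈ P, p ≠ q → ∀ v : V, v ∈ p → v ∈ q → v = s ∨ v = t

theorem RWalk.head_mem {V : Type} {r : V → V → Prop} {s t : V} {p : List V}
    (h : RWalk r s t p) : s ∈ p := by
  cases h <;> simp

/-- Vertices of `D` are sinks of `H`. -/
theorem RWalk.eq_of_vd {A B C D : Type} {eAB : A → B → Prop} {eBC : B → C → Prop}
    {eCD : C → D → Prop} {eAC : A → C → Prop} {eBD : B → D → Prop} {x d : D}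
    {p : List (V4 A B C D)}
    (h : RWalk (Hadj eAB eBC eCD eAC eBD) (V4.vd x) (V4.vd d) p) : x = d := by
  cases h with
  | nil => rfl
  | cons h _ => simp [Hadj] at h

/-- The only arcs leaving `C` go to `D`, so a path from `c` to `d` is a single arc. -/
theorem RWalk.edge_of_vc {A B C D : Type} {eAB : A → B → Prop} {eBC : B → C → Prop}
    {eCD : C → D → Prop} {eAC : A → C → Prop} {eBD : B → D → Prop} {c : C} {d : D}
    {p : List (V4 A B C D)}
    (h : RWalk (Hadj eAB eBC eCD eAC eBD) (V4.vc c) (V4.vd d) p) : eCD c d := by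
  cases h with
  | @cons _ v _ _ h hw =>
    cases v with
    | vd y => exact hw.eq_of_vd ▸ h
    | _ => simp [Hadj] at h

/-- If `{a,d} ∈ E(G)` and no `b ∈ B`, `c ∈ C` complete a `4`-clique with `a` and `d`,
then every directed path from `a` to `d` in `H` contains a vertex of
`B'_{a,d} ∪ C'_{a,d}`; i.e. `B'_{a,d} ∪ C'_{a,d}` is an `a`-`d` vertex cut in `H`. -/
theorem no_clique_vertex_cut
    {A B C D : Type} [Fintype A] [Fintype B] [Fintype C] [Fintype D]
    (eAB : A → B → Prop) (eAC : A → C → Prop) (eAD : A → D → Prop)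
    (eBC : B → C → Prop) (eBD : B → D → Prop) (eCD : C → D → Prop)
    (a : A) (d : D) (had : eAD a d)
    (hno : ¬ ∃ (b : B) (c : C),
      eAB a b ∧ eAC a c ∧ eAD a d ∧ eBC b c ∧ eBD b d ∧ eCD c d) :
    ∀ p : List (V4 A B C D),
      RWalk (Hadj eAB eBC eCD eAC eBD) (V4.va a) (V4.vd d) p →
      ∃ v ∈ p,
        (∃ b : B, v = V4.vb b ∧ eAB a b ∧ ¬ eBD b d) ∨
        (∃ cc : C, v = V4.vc cc ∧ ¬ eAC a cc ∧ eCD cc d) := by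
  intro p hp
  cases hp with
  | @cons _ v _ _ h hw =>
    cases v with
    | vb b =>
      have hab : eAB a b := h
      by_cases hbd : eBD b d
      · cases hw with
        | @cons _ v _ _ h' hw' =>
          cases v with
          | vc c =>
            have hcd := hw'.edge_of_vc
            refine ⟨V4.vc c, by simp [hw'.head_mem], Or.inr ⟨c, rfl, fun hac => ?_, hcd⟩⟩
            exact hno ⟨b, c, hab, hac, had, h', hbd, hcd⟩
          | vd y =>
            obtain rfl := hw'.eq_of_vd
            exact absurd hbd h'
          | _ => simp [Hadj] at h'
      · exact ⟨V4.vb b, by simp [hw.head_mem], Or.inl ⟨b, rfl, hab, hbd⟩⟩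
    | vc c =>
      exact ⟨V4.vc c, by simp [hw.head_mem], Or.inr ⟨c, rfl, h, hw.edge_of_vc⟩⟩
    | _ => simp [Hadj] at h
end
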